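/- arXiv:1511.03237 — 3 statements merged into one kernel-verified Lean document; each statement's English description precedes it below -/
import Mathlib

section
/- Let n, d be positive integers and suppose n = k·d + r with integers k, r satisfying k ≥ |r| + 1. Then for every finite sequence z₀, z₁, …, z_l of Gaussian integers with |z_{j+1} - z_j| = 1 for all j and with z_s - z_t = n for some indices s, t, there exist indices u, v with z_u - z_v = d. -/
/-- The points `(a, b)` and `(a', b')` of `ℤ²` are neighbours in the square lattice. -/
def LatticeAdj (a b a' b' : ℤ) : Prop :=
  (b' = b ∧ (a' = a + 1 ∨ a' = a - 1)) ∨ (a' = a ∧ (b' = b + 1 ∨ b' = b - 1))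

/-- The signed number of times the first `L` steps of the lattice walk `(x, y)` cross, modulo
horizontal translation by `N`, the upward vertical ray that starts at `(px + 1 / 2, py)`. -/
def rayCrossings (N : ℤ) (x y : ℕ → ℤ) (L : ℕ) (px py : ℤ) : ℤ :=
  ∑ t ∈ Finset.range L,
    if py ≤ y t then (x (t + 1) - px - 1) / N - (x t - px - 1) / N else 0

theorem Int.sub_one_ediv_of_not_dvd {N u : ℤ} (hN : 0 < N) (h : ¬ N ∣ u) :
    (u - 1) / N = u / N := by
  have h1 := Int.emod_nonneg u hN.ne'
  have h2 := Int.emod_lt_of_pos u hN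
  have h3 := Int.mul_ediv_add_emod u N
  have h4 : u % N ≠ 0 := fun h0 => h (Int.dvd_of_emod_eq_zero h0)
  rw [Int.ediv_eq_iff_of_pos hN]
  have h5 : u / N * N = N * (u / N) := mul_comm _ _
  constructor <;> omega

theorem rayCrossings_add_one_right {N : ℤ} (hN : 0 < N) {x y : ℕ → ℤ} {L : ℕ}
    (hstep : ∀ j < L, LatticeAdj (x j) (y j) (x (j + 1)) (y (j + 1))) {px py : ℤ}
    (hp : ∀ t ≤ L, y t = py → ¬ N ∣ x t - px) :
    rayCrossings N x y L px (py + 1) = rayCrossings N x y L px py := by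
  unfold rayCrossings
  refine Finset.sum_congr rfl fun t ht => ?_
  rw [Finset.mem_range] at ht
  rcases lt_trichotomy (y t) py with h | h | h
  · rw [if_neg (by omega), if_neg (by omega)]
  · rw [if_neg (by omega), if_pos (by omega)]
    rcases hstep t ht with ⟨hy, hx | hx⟩ | ⟨hx, -⟩
    · have := Int.sub_one_ediv_of_not_dvd hN (hp t ht.le h)
      rw [hx, show x t + 1 - px - 1 = x t - px by ring]
      omega
    · have := Int.sub_one_ediv_of_not_dvd hN (hp (t + 1) ht (hy.trans h))
      rw [show x t - px - 1 = x (t + 1) - px by omega]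
      omega
    · rw [hx, sub_self]
  · rw [if_pos (by omega), if_pos (by omega)]

theorem rayCrossings_add_one_left {N : ℤ} (hN : 0 < N) {x y : ℕ → ℤ} {L : ℕ}
    (hstep : ∀ j < L, LatticeAdj (x j) (y j) (x (j + 1)) (y (j + 1)))
    (hy : y L = y 0) (hx : N ∣ x L - x 0) {px py : ℤ}
    (hp : ∀ t ≤ L, y t = py → ¬ N ∣ x t - (px + 1)) :
    rayCrossings N x y L (px + 1) py = rayCrossings N x y L px py := by
  set g : ℕ → ℤ := fun t =>
    if py ≤ y t then (x t - px - 1) / N - (x t - (px + 1) - 1) / N else 0 with hg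
  have hgL : g L = g 0 := by
    obtain ⟨c, hc⟩ := hx
    simp only [hg, hy]
    rw [show x L - px - 1 = (x 0 - px - 1) + N * c by linarith,
      show x L - (px + 1) - 1 = (x 0 - (px + 1) - 1) + N * c by linarith,
      Int.add_mul_ediv_left _ _ hN.ne', Int.add_mul_ediv_left _ _ hN.ne']
    split_ifs <;> ring
  have hsum : rayCrossings N x y L px py - rayCrossings N x y L (px + 1) py
      = ∑ t ∈ Finset.range L, (g (t + 1) - g t) := by
    unfold rayCrossings
    rw [← Finset.sum_sub_distrib]
    refine Finset.sum_congr rfl fun t ht => ?_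
    rw [Finset.mem_range] at ht
    simp only [hg]
    rcases hstep t ht with ⟨hy', -⟩ | ⟨hx', hy'⟩
    · rw [hy']
      split_ifs <;> ring
    · have h1 : y t = py → (x t - px - 1) / N = (x t - (px + 1) - 1) / N := fun h => by
        rw [Int.sub_one_ediv_of_not_dvd hN (hp t ht.le h), sub_sub]
      have h2 : y (t + 1) = py → (x t - px - 1) / N = (x t - (px + 1) - 1) / N := fun h => by
        rw [← hx', Int.sub_one_ediv_of_not_dvd hN (hp (t + 1) ht h), sub_sub]
      rw [hx']
      split_ifs <;> omega
  rw [Finset.sum_range_sub, hgL, sub_self] at hsum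
  omega

theorem rayCrossings_eq_of_latticeAdj {N : ℤ} (hN : 0 < N) {x y : ℕ → ℤ} {L : ℕ}
    (hstep : ∀ j < L, LatticeAdj (x j) (y j) (x (j + 1)) (y (j + 1)))
    (hy : y L = y 0) (hx : N ∣ x L - x 0) {px py qx qy : ℤ} (hpq : LatticeAdj px py qx qy)
    (hp : ∀ t ≤ L, y t = py → ¬ N ∣ x t - px) (hq : ∀ t ≤ L, y t = qy → ¬ N ∣ x t - qx) :
    rayCrossings N x y L qx qy = rayCrossings N x y L px py := by
  rcases hpq with ⟨rfl, rfl | h⟩ | ⟨rfl, rfl | h⟩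
  · exact rayCrossings_add_one_left hN hstep hy hx hq
  · obtain rfl : px = qx + 1 := by omega
    exact (rayCrossings_add_one_left hN hstep hy hx hp).symm
  · exact rayCrossings_add_one_right hN hstep hp
  · obtain rfl : py = qy + 1 := by omega
    exact (rayCrossings_add_one_right hN hstep hq).symm

/-- On the cylinder `ℤ/N × ℤ`, a closed lattice walk with nonzero winding number meets each of
its rotations. -/
theorem exists_dvd_sub_of_closed_walk {N : ℤ} (hN : 0 < N) {x y : ℕ → ℤ} {L : ℕ}
    (hstep : ∀ j < L, LatticeAdj (x j) (y j) (x (j + 1)) (y (j + 1)))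
    (hy : y L = y 0) {m : ℤ} (hm : m ≠ 0) (hx : x L = x 0 + N * m) (d : ℤ) :
    ∃ s ≤ L, ∃ t ≤ L, y t = y s ∧ N ∣ x t - (x s + d) := by
  by_contra! H
  have hdvd : N ∣ x L - x 0 := ⟨m, by omega⟩
  have hconst : ∀ s ≤ L, rayCrossings N x y L (x s + d) (y s)
      = rayCrossings N x y L (x 0 + d) (y 0) := by
    intro s
    induction s with
    | zero => intro _; rfl
    | succ s ih =>
      intro hs
      rw [← ih (by omega)]
      refine rayCrossings_eq_of_latticeAdj hN hstep hy hdvd ?_ (H s (by omega)) (H (s + 1) hs)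
      have := hstep s hs
      unfold LatticeAdj at *
      omega
  obtain ⟨a, ha, hmax⟩ := Finset.exists_max_image (Finset.range (L + 1)) y ⟨0, by simp⟩
  obtain ⟨b, hb, hmin⟩ := Finset.exists_min_image (Finset.range (L + 1)) y ⟨0, by simp⟩
  simp only [Finset.mem_range, Nat.lt_succ_iff] at ha hb hmax hmin
  have htop : rayCrossings N x y L (x a + d) (y a) = 0 := by
    rw [← rayCrossings_add_one_right hN hstep (H a ha)]
    refine Finset.sum_eq_zero fun t ht => if_neg ?_
    have := hmax t (Finset.mem_range.1 ht).le
    omega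
  have hbot : rayCrossings N x y L (x b + d) (y b) = m := by
    unfold rayCrossings
    rw [Finset.sum_congr rfl fun t ht => if_pos (hmin t (Finset.mem_range.1 ht).le),
      Finset.sum_range_sub (fun t => (x t - (x b + d) - 1) / N), hx,
      show x 0 + N * m - (x b + d) - 1 = (x 0 - (x b + d) - 1) + N * m by ring,
      Int.add_mul_ediv_left _ _ hN.ne']
    ring
  rw [hconst a ha] at htop
  rw [hconst b hb] at hbot
  omega

theorem eq_and_eq_of_mul_add_eq {d k r j i : ℤ} (h : k * d + r = j * d + i)
    (hlt : |r - i| < d) : k = j ∧ r = i := by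
  have h0 : r - i = 0 := Int.eq_zero_of_abs_lt_dvd ⟨j - k, by linarith⟩ hlt
  have hd : d ≠ 0 := by
    have := abs_nonneg (r - i)
    omega
  exact ⟨mul_right_cancel₀ hd (by linarith), by omega⟩

/-- A lattice walk from `(x 0, y 0)` to `(x 0 + k * d + r, y 0)` with `|r| < d` and `|r| < |k|`
has a horizontal chord of length `d`. -/
theorem exists_chord_of_walk {d : ℤ} (hd : 0 < d) (L : ℕ) :
    ∀ (x y : ℕ → ℤ) (k r : ℤ), |r| < d → |r| < |k| →
      (∀ j < L, LatticeAdj (x j) (y j) (x (j + 1)) (y (j + 1))) →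
      y L = y 0 → x L = x 0 + (k * d + r) →
      ∃ u ≤ L, ∃ v ≤ L, x u - x v = d ∧ y u = y v := by
  induction L using Nat.strong_induction_on with
  | _ L ih =>
  intro x y k r hrd hrk hstep hy hx
  have sub : ∀ a b : ℕ, ∀ k' r' : ℤ, a ≤ b → b ≤ L → (0 < a ∨ b < L) → |r'| < d → |r'| < |k'| →
      y b = y a → x b = x a + (k' * d + r') →
      ∃ u ≤ L, ∃ v ≤ L, x u - x v = d ∧ y u = y v := by
    intro a b k' r' hab hb hne h1 h2 h3 h4
    obtain ⟨u, hu, v, hv, h⟩ := ih (b - a) (by omega) (fun j => x (a + j)) (fun j => y (a + j))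
      k' r' h1 h2 (fun j hj => hstep (a + j) (by omega))
      (by simpa [Nat.add_sub_cancel' hab] using h3) (by simpa [Nat.add_sub_cancel' hab] using h4)
    exact ⟨a + u, by omega, a + v, by omega, h⟩
  have hr0 := abs_nonneg r
  rcases (show |k| = 1 ∨ 2 ≤ |k| by omega) with hk1 | hk2
  · obtain rfl : r = 0 := abs_eq_zero.1 (by omega)
    rcases (abs_eq (by norm_num : (0 : ℤ) ≤ 1)).1 hk1 with rfl | rfl
    · exact ⟨L, le_rfl, 0, by omega, by omega, hy⟩
    · exact ⟨0, by omega, L, le_rfl, by omega, hy.symm⟩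
  have pair : ∀ s t : ℕ, ∀ j : ℤ, s ≤ L → t ≤ L → ¬ |k| ∣ j → y t = y s → x t = x s + j * d →
      ∃ u ≤ L, ∃ v ≤ L, x u - x v = d ∧ y u = y v := by
    intro s t j hs ht hj hyy hxx
    have hj0 : j ≠ 0 := by rintro rfl; exact hj (dvd_zero _)
    have hjpos := abs_pos.2 hj0
    rcases le_total s t with hst | hst
    · refine sub s t j 0 hst ht ?_ (by simpa) (by simpa) hyy (by omega)
      by_contra! hcon
      obtain rfl : s = 0 := by omega
      obtain rfl : t = L := by omega
      obtain ⟨rfl, -⟩ := eq_and_eq_of_mul_add_eq (show k * d + r = j * d + 0 by omega) (by simpa)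
      exact hj (abs_dvd_self k)
    · refine sub t s (-j) 0 hst hs ?_ (by simpa) (by simpa) hyy.symm (by rw [neg_mul]; omega)
      by_contra! hcon
      obtain rfl : t = 0 := by omega
      obtain rfl : s = L := by omega
      obtain ⟨rfl, -⟩ := eq_and_eq_of_mul_add_eq
        (show k * d + r = (-j) * d + 0 by rw [neg_mul]; omega) (by simpa)
      exact hj (by simp)
  have mixed : ∀ t : ℕ, ∀ j i : ℤ, t ≤ L → ¬ |k| ∣ j → |i| + |r - i| = |r| → y t = y 0 →
      x t = x 0 + (j * d + i) → ∃ u ≤ L, ∃ v ≤ L, x u - x v = d ∧ y u = y v := by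
    intro t j i ht hj hi hyt hxt
    have hi0 := abs_nonneg i
    have hri0 := abs_nonneg (r - i)
    have htri : |k| ≤ |j| + |k - j| := by simpa using abs_add_le j (k - j)
    rcases (show |i| < |j| ∨ |r - i| < |k - j| by omega) with h | h
    · refine sub 0 t j i (by omega) ht ?_ (by omega) h hyt hxt
      by_contra! hcon
      obtain rfl : t = L := by omega
      obtain ⟨rfl, -⟩ := eq_and_eq_of_mul_add_eq
        (show k * d + r = j * d + i by omega) (by omega)
      exact hj (abs_dvd_self k)
    · refine sub t L (k - j) (r - i) ht le_rfl ?_ (by omega) h (by omega)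
        (by rw [sub_mul]; omega)
      by_contra! hcon
      obtain rfl : t = 0 := by omega
      obtain ⟨rfl, -⟩ := eq_and_eq_of_mul_add_eq
        (show j * d + i = 0 * d + 0 by omega) (by rw [sub_zero]; omega)
      exact hj (dvd_zero _)
  set X : ℕ → ℤ := fun j => if j ≤ L then x j else x L - r.sign * (j - L : ℤ) with hX
  set Y : ℕ → ℤ := fun j => if j ≤ L then y j else y L with hY
  have hk0 : k ≠ 0 := abs_pos.1 (by omega)
  have hsign : r.sign * (r.natAbs : ℤ) = r := Int.sign_mul_natAbs r
  have hclass : ∀ t ≤ L + r.natAbs, (t ≤ L ∧ X t = x t ∧ Y t = y t) ∨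
      (Y t = y 0 ∧ ∃ i, |i| + |r - i| = |r| ∧ X t = x 0 + (k * d + i)) := by
    intro t ht
    by_cases h : t ≤ L
    · exact Or.inl ⟨h, by simp [hX, h], by simp [hY, h]⟩
    · refine Or.inr ⟨by simp [hY, h, hy], r - r.sign * (t - L : ℤ), ?_, ?_⟩
      · rcases lt_trichotomy r 0 with h0 | rfl | h0
        · rw [Int.sign_eq_neg_one_of_neg h0, abs_of_nonpos, abs_of_nonpos, abs_of_nonpos] <;> omega
        · simp
        · rw [Int.sign_eq_one_of_pos h0, abs_of_nonneg, abs_of_nonneg, abs_of_nonneg] <;> omega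
      · simp only [hX, h, if_false]
        omega
  have hstepX : ∀ j < L + r.natAbs, LatticeAdj (X j) (Y j) (X (j + 1)) (Y (j + 1)) := by
    intro j hj
    rcases lt_or_ge j L with h | h
    · simpa [hX, hY, h.le, Nat.succ_le_of_lt h] using hstep j h
    · have hXj : X j = x L - r.sign * (j - L : ℤ) := by
        rcases h.eq_or_lt with rfl | h
        · simp [hX]
        · simp [hX, h.not_ge]
      have hYj : Y j = y L := by
        rcases h.eq_or_lt with rfl | h
        · simp [hY]
        · simp [hY, h.not_ge]
      have hXj' : X (j + 1) = x L - r.sign * (j - L : ℤ) - r.sign := by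
        simp only [hX, show ¬ j + 1 ≤ L by omega, if_false]
        push_cast
        ring
      have hYj' : Y (j + 1) = y L := by simp [hY, show ¬ j + 1 ≤ L by omega]
      rw [hXj, hYj, hXj', hYj']
      refine Or.inl ⟨rfl, ?_⟩
      rcases lt_trichotomy r 0 with h0 | rfl | h0
      · rw [Int.sign_eq_neg_one_of_neg h0]; omega
      · simp at hj; omega
      · rw [Int.sign_eq_one_of_pos h0]; omega
  have hX0 : X 0 = x 0 := by simp [hX]
  have hY0 : Y 0 = y 0 := by simp [hY]
  have hXend : X (L + r.natAbs) = X 0 + (|k| * d) * k.sign := by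
    have h1 : |k| * d * k.sign = k * d := by
      rw [mul_right_comm, mul_comm |k|, Int.sign_mul_abs]
    rw [hX0, h1]
    by_cases h : r = 0
    · subst h; simp [hX, hx]
    · have : ¬ L + r.natAbs ≤ L := by omega
      simp only [hX, this, if_false]
      push_cast at hsign ⊢
      rw [add_sub_cancel_left, hsign]
      omega
  have hYend : Y (L + r.natAbs) = Y 0 := by
    rw [hY0]
    rcases hclass _ le_rfl with ⟨h, -, h'⟩ | ⟨h, -⟩
    · rw [h', show L + r.natAbs = L by omega, hy]
    · exact h
  obtain ⟨s, hs, t, ht, hyst, c, hc⟩ := exists_dvd_sub_of_closed_walk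
    (mul_pos (by omega : 0 < |k|) hd) hstepX hYend (mt Int.sign_eq_zero_iff_zero.1 hk0) hXend d
  have hkk : |k| ∣ k := abs_dvd_self k
  have key : ¬ |k| ∣ 1 + |k| * c := by
    rw [dvd_add_left (Dvd.intro c rfl)]
    intro h
    have := Int.le_of_dvd one_pos h
    omega
  rcases hclass s hs with ⟨hsL, hXs, hYs⟩ | ⟨hYs, i, hi, hXs⟩ <;>
  rcases hclass t ht with ⟨htL, hXt, hYt⟩ | ⟨hYt, i', hi', hXt⟩
  · exact pair s t (1 + |k| * c) hsL htL key (by omega) (by linarith)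
  · refine mixed s (k - (1 + |k| * c)) i' hsL ?_ hi' (by omega) (by linarith)
    rwa [dvd_sub_right hkk]
  · refine mixed t (k + (1 + |k| * c)) i htL ?_ hi (by omega) (by linarith)
    rwa [dvd_add_right hkk]
  · have hii : |i' - i| < d := by
      refine lt_of_le_of_lt (abs_le.2 ?_) hrd
      rcases abs_cases r with h | h <;> rcases abs_cases i with h1 | h1 <;>
      rcases abs_cases (r - i) with h2 | h2 <;> rcases abs_cases i' with h3 | h3 <;>
      rcases abs_cases (r - i') with h4 | h4 <;> omega
    obtain ⟨h0, -⟩ := eq_and_eq_of_mul_add_eq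
      (show 0 * d + i' = (1 + |k| * c) * d + i by linarith) hii
    exact absurd (h0 ▸ dvd_zero _) key

theorem exists_reduced_representation {d k r : ℤ} (hd : 0 < d) (hk : |r| < k) :
    ∃ k' r' : ℤ, k * d + r = k' * d + r' ∧ |r'| < d ∧ |r'| < |k'| := by
  have h1 := Int.emod_nonneg |r| hd.ne'
  have h2 := Int.emod_lt_of_pos |r| hd
  have h3 := Int.mul_ediv_add_emod |r| d
  have h4 : 0 ≤ |r| / d := Int.ediv_nonneg (abs_nonneg r) hd.le
  have h5 : |r| / d ≤ d * (|r| / d) := le_mul_of_one_le_left h4 hd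
  rcases abs_choice r with h | h
  · refine ⟨k + |r| / d, |r| % d, by linarith, by rwa [abs_of_nonneg h1], ?_⟩
    rw [abs_of_nonneg h1]
    exact lt_of_lt_of_le (by omega) (le_abs_self _)
  · refine ⟨k - |r| / d, -(|r| % d), by linarith, by rwa [abs_neg, abs_of_nonneg h1], ?_⟩
    rw [abs_neg, abs_of_nonneg h1]
    exact lt_of_lt_of_le (by omega) (le_abs_self _)

theorem latticeAdj_of_norm_sub_eq_one {z w : GaussianInt} (h : (w - z).norm = 1) :
    LatticeAdj z.re z.im w.re w.im := by
  rw [Zsqrtd.norm_def, Zsqrtd.re_sub, Zsqrtd.im_sub] at h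
  generalize ha : w.re - z.re = a at h
  generalize hb : w.im - z.im = b at h
  have ha1 : a ≤ 1 := by nlinarith [mul_self_nonneg b]
  have ha2 : -1 ≤ a := by nlinarith [mul_self_nonneg b]
  have hb1 : b ≤ 1 := by nlinarith [mul_self_nonneg a]
  have hb2 : -1 ≤ b := by nlinarith [mul_self_nonneg a]
  unfold LatticeAdj
  interval_cases a <;> interval_cases b <;> omega

/-- If n = k·d + r with k ≥ |r| + 1 then every unit-step walk of Gaussian integers
realizing the difference n realizes the difference d. -/
theorem stmt_2 (n d : ℤ) (hn : 0 < n) (hd : 0 < d)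
    (k r : ℤ) (hkr : n = k * d + r) (hk : k ≥ |r| + 1)
    (l : ℕ) (z : ℕ → GaussianInt)
    (hstep : ∀ j < l, (z (j + 1) - z j).norm = 1)
    (hreal : ∃ s t, s ≤ l ∧ t ≤ l ∧ z s - z t = (n : GaussianInt)) :
    ∃ u v, u ≤ l ∧ v ≤ l ∧ z u - z v = (d : GaussianInt) := by
  obtain ⟨k', r', hn', hr'd, hr'k⟩ := exists_reduced_representation (r := r) hd (by omega : |r| < k)
  have main : ∀ a b : ℕ, ∀ k r : ℤ, a ≤ b → b ≤ l → |r| < d → |r| < |k| →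
      (z b).im = (z a).im → (z b).re = (z a).re + (k * d + r) →
      ∃ u v, u ≤ l ∧ v ≤ l ∧ z u - z v = (d : GaussianInt) := by
    intro a b k r hab hb h1 h2 h3 h4
    obtain ⟨u, hu, v, hv, hre, him⟩ := exists_chord_of_walk hd (b - a)
      (fun j => (z (a + j)).re) (fun j => (z (a + j)).im) k r h1 h2
      (fun j hj => latticeAdj_of_norm_sub_eq_one (hstep (a + j) (by omega)))
      (by simpa [Nat.add_sub_cancel' hab] using h3) (by simpa [Nat.add_sub_cancel' hab] using h4)
    refine ⟨a + u, a + v, by omega, by omega, ?_⟩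
    ext
    · simpa using hre
    · simpa [sub_eq_zero] using him
  obtain ⟨s, t, hs, ht, hst⟩ := hreal
  have hre : (z s).re - (z t).re = n := by simpa using congrArg Zsqrtd.re hst
  have him : (z s).im - (z t).im = 0 := by simpa using congrArg Zsqrtd.im hst
  rcases le_total t s with h | h
  · exact main t s k' r' h hs hr'd hr'k (by omega) (by omega)
  · exact main s t (-k') (-r') h ht (by rwa [abs_neg]) (by rwa [abs_neg, abs_neg]) (by omega)
      (by rw [neg_mul]; omega)
end

section
/- Let n, d be positive integers and write n = k(n,d)·d + r(n,d) with r(n,d) the unique integer in [-⌊d/2⌋, ⌈d/2⌉-1]. If k(n,d) ≤ |r(n,d)|, then there exists a finite sequence z₀, z₁, …, z_l of Gaussian integers with |z_{j+1} - z_j| = 1 for all j, with z_s - z_t = n for some indices s, t, and with z_u - z_v ≠ d for all indices u, v. -/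
/-- The vertical strip of Gaussian integers lying at height between `0` and `W` above the graph
of `g`. -/
def graphStrip (g : ℤ → ℤ) (W : ℤ) : Set GaussianInt :=
  {z | g z.re ≤ z.im ∧ z.im ≤ g z.re + W}

/-- Two points of `S` are adjacent if they differ by a Gaussian integer of norm one. -/
def UnitStep (S : Set GaussianInt) (z w : GaussianInt) : Prop :=
  z ∈ S ∧ w ∈ S ∧ (w - z).norm = 1

lemma UnitStep.symm {S : Set GaussianInt} {z w : GaussianInt} (h : UnitStep S z w) :
    UnitStep S w z := by
  refine ⟨h.2.1, h.1, ?_⟩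
  rw [← neg_sub, Zsqrtd.norm_neg]
  exact h.2.2

lemma reflTransGen_unitStep_symm {S : Set GaussianInt} {z w : GaussianInt}
    (h : Relation.ReflTransGen (UnitStep S) z w) : Relation.ReflTransGen (UnitStep S) w z := by
  induction h with
  | refl => exact .refl
  | tail _ hbc ih => exact .head hbc.symm ih

/-- A chain of unit steps inside `S` can be written as a walk inside `S`. -/
lemma exists_walk_of_reflTransGen {S : Set GaussianInt} {z w : GaussianInt} (hz : z ∈ S)
    (h : Relation.ReflTransGen (UnitStep S) z w) :
    ∃ (l : ℕ) (f : ℕ → GaussianInt), f 0 = z ∧ f l = w ∧ (∀ j ≤ l, f j ∈ S) ∧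
      ∀ j < l, (f (j + 1) - f j).norm = 1 := by
  induction h with
  | refl => exact ⟨0, fun _ => z, rfl, rfl, fun _ _ => hz, fun j hj => absurd hj (by omega)⟩
  | @tail b c _ hbc ih =>
    obtain ⟨l, f, h0, hl, hS, hstep⟩ := ih
    refine ⟨l + 1, fun i => if i ≤ l then f i else c, by simpa using h0, by simp, ?_, ?_⟩
    · intro j _
      by_cases h : j ≤ l
      · simpa [h] using hS j h
      · simpa [h] using hbc.2.1
    · intro j hj
      by_cases h : j < l
      · have h1 : j + 1 ≤ l := h
        have h2 : j ≤ l := h.le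
        simpa [h1, h2] using hstep j h
      · obtain rfl : j = l := by omega
        simpa [hl] using hbc.2.2

lemma reflTransGen_graphStrip_vertical (g : ℤ → ℤ) (W x y : ℤ) (m : ℕ) (hy : g x ≤ y)
    (hm : y + m ≤ g x + W) :
    Relation.ReflTransGen (UnitStep (graphStrip g W)) ⟨x, y⟩ ⟨x, y + m⟩ := by
  induction m with
  | zero => simpa using Relation.ReflTransGen.refl
  | succ m ih =>
    push_cast at hm
    refine .tail (ih (by omega)) ⟨⟨?_, ?_⟩, ⟨?_, ?_⟩, ?_⟩
    · change g x ≤ y + m; omega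
    · change y + (m : ℤ) ≤ g x + W; omega
    · change g x ≤ y + ((m + 1 : ℕ) : ℤ); push_cast; omega
    · change y + ((m + 1 : ℕ) : ℤ) ≤ g x + W; push_cast; omega
    · simp [Zsqrtd.norm_def]

lemma reflTransGen_graphStrip_column (g : ℤ → ℤ) (W x y y' : ℤ)
    (h : (⟨x, y⟩ : GaussianInt) ∈ graphStrip g W) (h' : (⟨x, y'⟩ : GaussianInt) ∈ graphStrip g W) :
    Relation.ReflTransGen (UnitStep (graphStrip g W)) ⟨x, y⟩ ⟨x, y'⟩ := by
  obtain ⟨h1, h2⟩ : g x ≤ y ∧ y ≤ g x + W := h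
  obtain ⟨h3, h4⟩ : g x ≤ y' ∧ y' ≤ g x + W := h'
  rcases le_total y y' with hle | hle
  · obtain ⟨m, rfl⟩ := Int.le.dest hle
    exact reflTransGen_graphStrip_vertical g W x y m h1 h4
  · obtain ⟨m, rfl⟩ := Int.le.dest hle
    exact reflTransGen_unitStep_symm (reflTransGen_graphStrip_vertical g W x y' m h3 h2)

/-- If `g` varies by at most `W` between consecutive integers, then the strip is connected. -/
lemma reflTransGen_graphStrip (g : ℤ → ℤ) (W : ℤ) (hg : ∀ x, |g (x + 1) - g x| ≤ W) (x y : ℤ)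
    (h : (⟨x, y⟩ : GaussianInt) ∈ graphStrip g W) (m : ℕ) (y' : ℤ)
    (h' : (⟨x + m, y'⟩ : GaussianInt) ∈ graphStrip g W) :
    Relation.ReflTransGen (UnitStep (graphStrip g W)) ⟨x, y⟩ ⟨x + m, y'⟩ := by
  induction m generalizing y' with
  | zero =>
    simp only [Nat.cast_zero, add_zero] at h' ⊢
    exact reflTransGen_graphStrip_column g W x y y' h h'
  | succ m ih =>
    have hgm := abs_le.mp (hg (x + m))
    have hW : 0 ≤ W := (abs_nonneg _).trans (hg x)
    have hcast : x + ((m + 1 : ℕ) : ℤ) = x + m + 1 := by push_cast; ring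
    rw [hcast] at h' ⊢
    set t := max (g (x + m)) (g (x + m + 1)) with ht
    have hl : (⟨x + m, t⟩ : GaussianInt) ∈ graphStrip g W :=
      show g (x + m) ≤ t ∧ t ≤ g (x + m) + W by omega
    have hr : (⟨x + m + 1, t⟩ : GaussianInt) ∈ graphStrip g W :=
      show g (x + m + 1) ≤ t ∧ t ≤ g (x + m + 1) + W by omega
    refine (ih t hl).trans (.head ⟨hl, hr, ?_⟩
      (reflTransGen_graphStrip_column g W (x + m + 1) t y' hr h'))
    simp [Zsqrtd.norm_def]

/-- A function with steps at most `W` that drops by more than `W` over each period `d` yields a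
walk that avoids the difference `d`. -/
lemma exists_walk_avoiding (g : ℤ → ℤ) (W C n d : ℤ) (hn : 0 ≤ n) (hC : W < C)
    (hg : ∀ x, |g (x + 1) - g x| ≤ W) (hgd : ∀ x, g (x + d) = g x - C)
    (h0 : g 0 ≤ 0 ∧ 0 ≤ g 0 + W) (h1 : g n ≤ 0 ∧ 0 ≤ g n + W) :
    ∃ (l : ℕ) (z : ℕ → GaussianInt),
      (∀ j < l, (z (j + 1) - z j).norm = 1) ∧
      (∃ s t, s ≤ l ∧ t ≤ l ∧ z s - z t = (n : GaussianInt)) ∧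
      (∀ u v, u ≤ l → v ≤ l → z u - z v ≠ (d : GaussianInt)) := by
  obtain ⟨m, rfl⟩ := Int.eq_ofNat_of_zero_le hn
  have hmem : (⟨0, 0⟩ : GaussianInt) ∈ graphStrip g W := h0
  have hchain := reflTransGen_graphStrip g W hg 0 0 hmem m 0 (by rw [zero_add]; exact h1)
  obtain ⟨l, z, hz0, hzl, hS, hstep⟩ := exists_walk_of_reflTransGen hmem hchain
  refine ⟨l, z, hstep, ⟨l, 0, le_rfl, Nat.zero_le _, ?_⟩, ?_⟩
  · rw [hzl, hz0]
    ext <;> simp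
  · intro u v hu hv huv
    have hre := congrArg Zsqrtd.re huv
    have him := congrArg Zsqrtd.im huv
    simp only [Zsqrtd.re_sub, Zsqrtd.im_sub, Zsqrtd.re_intCast, Zsqrtd.im_intCast] at hre him
    obtain ⟨hu1, hu2⟩ := hS u hu
    obtain ⟨hv1, hv2⟩ := hS v hv
    have hx : (z u).re = (z v).re + d := by omega
    rw [hx, hgd] at hu1 hu2
    omega

/-- There is a function with steps at most `W` taking prescribed compatible values at two
integers. -/
lemma exists_interpolation (W c v e : ℤ) (hW : 0 ≤ W) (hp : |v - c| ≤ W * e) :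
    ∃ f : ℤ → ℤ, (∀ x, |f (x + 1) - f x| ≤ W) ∧ f 0 = c ∧ f e = v := by
  have hp := abs_le.mp hp
  refine ⟨fun x => max (c - W * x) (min (c + W * x) v), fun x => ?_, ?_, ?_⟩
  · have : W * (x + 1) = W * x + W := by ring
    simp only [this]
    rw [abs_le]
    omega
  · simp
  · simp only
    omega

/-- A function with steps at most `W`, dropping by `C` over each period `d`, vanishing at `0`
and taking the value `v` at `p`. -/
lemma exists_quasiperiodic (W C d p v : ℤ) (hW : 0 ≤ W) (hd : 0 < d) (hp0 : 0 ≤ p) (hpd : p < d)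
    (h1 : |v| ≤ W * p) (h2 : |v + C| ≤ W * (d - p)) :
    ∃ g : ℤ → ℤ, (∀ x, |g (x + 1) - g x| ≤ W) ∧ (∀ x j, g (x + d * j) = g x - C * j) ∧
      g 0 = 0 ∧ g p = v := by
  obtain ⟨f, hf, hf0, hfp⟩ := exists_interpolation W 0 v p hW (by simpa using h1)
  obtain ⟨f', hf', hf'0, hf'p⟩ := exists_interpolation W v (-C) (d - p) hW
    (by rwa [← abs_neg, show -(-C - v) = v + C by ring])
  set a : ℤ → ℤ := fun x => if x ≤ p then f x else f' (x - p) with ha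
  have ha' : ∀ x, p ≤ x → a x = f' (x - p) := by
    intro x hx
    rcases hx.eq_or_lt with rfl | hx
    · simp [ha, hfp, hf'0]
    · simp [ha, not_le.mpr hx]
  have hastep : ∀ x, |a (x + 1) - a x| ≤ W := by
    intro x
    by_cases hx : x + 1 ≤ p
    · have hx' : x ≤ p := by omega
      simpa [ha, hx, hx'] using hf x
    · rw [ha' _ (by omega), ha' _ (by omega), show x + 1 - p = x - p + 1 by ring]
      exact hf' _
  have ha0 : a 0 = 0 := by simp [ha, hp0, hf0]
  have had : a d = -C := by rw [ha' d hpd.le, hf'p]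
  refine ⟨fun x => a (x % d) - C * (x / d), fun x => ?_, fun x j => ?_, ?_, ?_⟩
  · have hx := Int.emod_add_mul_ediv x d
    have hm0 := Int.emod_nonneg x hd.ne'
    have hmd := Int.emod_lt_of_pos x hd
    by_cases h : x % d + 1 = d
    · have hq : x + 1 = 0 + d * (x / d + 1) := by linarith
      have e1 : (x + 1) % d = 0 := by rw [hq, Int.add_mul_emod_self_left, Int.zero_emod]
      have e2 : (x + 1) / d = x / d + 1 := by
        rw [hq, Int.add_mul_ediv_left _ _ hd.ne', Int.zero_ediv, zero_add]
      have hs := hastep (x % d)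
      rw [h, had] at hs
      simp only [e1, e2, ha0]
      convert hs using 2
      ring
    · have hq : x + 1 = (x % d + 1) + d * (x / d) := by linarith
      have e1 : (x + 1) % d = x % d + 1 := by
        rw [hq, Int.add_mul_emod_self_left, Int.emod_eq_of_lt (by omega) (by omega)]
      have e2 : (x + 1) / d = x / d := by
        conv_lhs => rw [hq]
        rw [Int.add_mul_ediv_left _ _ hd.ne', Int.ediv_eq_zero_of_lt (by omega) (by omega),
          zero_add]
      simp only [e1, e2]
      convert hastep (x % d) using 2
      ring
  · simp only [Int.add_mul_emod_self_left, Int.add_mul_ediv_left _ _ hd.ne']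
    ring
  · simp [ha0]
  · simp [Int.emod_eq_of_lt hp0 hpd, Int.ediv_eq_zero_of_lt hp0 hpd, ha, hfp]

/-- A walk realizing the difference `p + d * j` and avoiding `d`, from a strip of height `W`. -/
lemma exists_walk_of_bounds (W d p j : ℤ) (hW : 0 ≤ W) (hd : 0 < d) (hp0 : 0 ≤ p) (hpd : p < d)
    (hj : 0 ≤ j) (h1 : |(W + 1) * j - W| ≤ W * p)
    (h2 : |(W + 1) * j - W + (W + 1)| ≤ W * (d - p)) :
    ∃ (l : ℕ) (z : ℕ → GaussianInt),
      (∀ j < l, (z (j + 1) - z j).norm = 1) ∧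
      (∃ s t, s ≤ l ∧ t ≤ l ∧ z s - z t = ((p + d * j : ℤ) : GaussianInt)) ∧
      (∀ u v, u ≤ l → v ≤ l → z u - z v ≠ (d : GaussianInt)) := by
  obtain ⟨g, hg, hgd, hg0, hgp⟩ := exists_quasiperiodic W (W + 1) d p _ hW hd hp0 hpd h1 h2
  refine exists_walk_avoiding g W (W + 1) (p + d * j) d (by positivity) (by omega) hg
    (fun x => by simpa using hgd x 1) (by omega) ?_
  rw [hgd, hgp]
  constructor <;> linarith

/-- If k(n,d) ≤ |r(n,d)| then there is a unit-step walk realizing the difference n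
and avoiding the difference d. -/
theorem stmt_3 (n d : ℤ) (hn : 0 < n) (hd : 0 < d)
    (k r : ℤ) (hkr : n = k * d + r)
    (hr1 : -(d / 2) ≤ r) (hr2 : r ≤ (d + 1) / 2 - 1)
    (hk : k ≤ |r|) :
    ∃ (l : ℕ) (z : ℕ → GaussianInt),
      (∀ j < l, (z (j + 1) - z j).norm = 1) ∧
      (∃ s t, s ≤ l ∧ t ≤ l ∧ z s - z t = (n : GaussianInt)) ∧
      (∀ u v, u ≤ l → v ≤ l → z u - z v ≠ (d : GaussianInt)) := by
  have hk0 : 0 ≤ k := by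
    by_contra! h
    have : k * d ≤ -1 * d := mul_le_mul_of_nonneg_right (by omega) hd.le
    omega
  rcases le_or_gt 0 r with hr | hr
  · rw [abs_of_nonneg hr] at hk
    have hr0 : 0 < r := by
      by_contra! h
      obtain rfl : r = 0 := by omega
      obtain rfl : k = 0 := by omega
      omega
    have hrd : r + 1 ≤ d - r := by omega
    have hmul : (r + 1) * (r + 1) ≤ (r + 1) * (d - r) := by gcongr
    have hkr' : (r + 2) * k ≤ (r + 2) * r := by gcongr
    have hk' : 0 ≤ (r + 2) * k := by positivity
    have := exists_walk_of_bounds (r + 1) d r k (by omega) hd hr (by omega) hk0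
      (by rw [abs_le]; constructor <;> nlinarith)
      (by rw [abs_le]; constructor <;> nlinarith)
    rwa [show r + d * k = n by rw [hkr]; ring] at this
  · rw [abs_of_neg hr] at hk
    obtain ⟨s, rfl⟩ : ∃ s, r = -s := ⟨-r, by ring⟩
    rw [neg_neg] at hk
    have hk1 : 1 ≤ k := by
      by_contra! h
      obtain rfl : k = 0 := by omega
      omega
    have hsd : s ≤ d - s := by omega
    have hs : 1 ≤ s := by omega
    have hmul : s * s ≤ s * (d - s) := by gcongr
    have hkr' : (s + 1) * k ≤ (s + 1) * s := by gcongr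
    have hk' : (s + 1) * 1 ≤ (s + 1) * k := by gcongr
    have := exists_walk_of_bounds s d (d - s) (k - 1) (by omega) hd (by omega) (by omega)
      (by omega) (by rw [abs_le]; constructor <;> nlinarith)
      (by rw [abs_le]; constructor <;> nlinarith)
    rwa [show d - s + d * (k - 1) = n by rw [hkr]; ring] at this
end

section
/- Let n and k be positive integers with k < (n+1)/(√(2n)+1) and k ∤ n. Then there exist exactly two integers r with -(k-1) ≤ r ≤ k-1 and k | (n - r); moreover, for each such r, the integer d = (n-r)/k satisfies d > √(2n) and |r| ≤ (d-1)/2. -/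
/-- Counting lemma: each k < (n+1)/(√(2n)+1) with k ∤ n contributes exactly two
balanced remainders r, each giving a modulus d = (n-r)/k with d > √(2n) and
|r| ≤ (d-1)/2. -/
theorem stmt_10 (n k : ℤ) (hn : 0 < n) (hk : 0 < k)
    (hkb : (k : ℝ) < ((n : ℝ) + 1) / (Real.sqrt (2 * (n : ℝ)) + 1))
    (hknd : ¬ k ∣ n) :
    ∃ r₁ r₂ : ℤ, r₁ ≠ r₂ ∧
      (∀ r : ℤ, (-(k - 1) ≤ r ∧ r ≤ k - 1 ∧ k ∣ (n - r)) ↔ (r = r₁ ∨ r = r₂)) ∧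
      (∀ r : ℤ, -(k - 1) ≤ r → r ≤ k - 1 → k ∣ (n - r) →
        (((n - r) / k : ℤ) : ℝ) > Real.sqrt (2 * (n : ℝ)) ∧
        (|r| : ℝ) ≤ ((((n - r) / k : ℤ) : ℝ) - 1) / 2) := by
  have hmod := Int.mul_ediv_add_emod n k
  have hmod_lt := Int.emod_lt_of_pos n hk
  have hmod_pos : 0 < n % k := lt_of_le_of_ne (Int.emod_nonneg n hk.ne')
    fun h => hknd (Int.dvd_of_emod_eq_zero h.symm)
  refine ⟨n % k, n % k - k, by omega, fun r => ⟨?_, ?_⟩, fun r hr hr' hdvd => ?_⟩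
  · rintro ⟨hr, hr', hdvd⟩
    have hdvd' : k ∣ n % k - r := by
      have h := dvd_sub hdvd (dvd_mul_right k (n / k))
      rwa [show n - r - k * (n / k) = n % k - r by linarith] at h
    obtain ⟨c, hc⟩ := hdvd'
    have hc_gt : -1 < c := by nlinarith
    have hc_lt : c < 2 := by nlinarith
    obtain rfl | rfl : c = 0 ∨ c = 1 := by omega
    · left; linarith
    · right; linarith
  · rintro (rfl | rfl)
    · exact ⟨by omega, by omega, n / k, by linarith⟩
    · exact ⟨by omega, by omega, n / k + 1, by linarith⟩
  · obtain ⟨d, hd⟩ := hdvd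
    rw [hd, Int.mul_ediv_cancel_left d hk.ne']
    have hn₁ : (1 : ℝ) ≤ n := by exact_mod_cast hn
    have hk₀ : (0 : ℝ) < k := by exact_mod_cast hk
    have hs_sq := Real.sq_sqrt (show (0 : ℝ) ≤ 2 * n by linarith)
    have hs_one : 1 ≤ Real.sqrt (2 * (n : ℝ)) := Real.one_le_sqrt.mpr (by linarith)
    set s := Real.sqrt (2 * (n : ℝ))
    rw [lt_div_iff₀ (by linarith)] at hkb
    have hd' : (n : ℝ) - r = k * d := by exact_mod_cast hd
    have hr_le : (r : ℝ) ≤ k - 1 := by exact_mod_cast hr'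
    have hsd : s < d := lt_of_mul_lt_mul_left (a := (k : ℝ)) (by linarith) hk₀.le
    have hks : 2 * (k : ℝ) < s + 1 := by nlinarith
    have hkd : 2 * k ≤ d := by
      have h : 2 * k < d + 1 := by exact_mod_cast (by linarith : 2 * (k : ℝ) < d + 1)
      omega
    have hkd' : 2 * (k : ℝ) ≤ d := by exact_mod_cast hkd
    have hr_ge : -((k : ℝ) - 1) ≤ r := by exact_mod_cast hr
    have habs := abs_le.mpr ⟨hr_ge, hr_le⟩
    exact ⟨hsd, by linarith⟩
end
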